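/- Let m ≥ 2 and M ≥ 1. Let L be a symmetric continuous m-linear form on the Banach space c₀ of complex null sequences (with the sup norm), let P(z) = L(z,…,z) be the associated m-homogeneous polynomial, and for each finitely supported multi-index α ∈ ℕ₀^{(ℕ)} with |α| = m let c_α(P) = (m!/∏_n α_n!) · L(e^α), where L(e^α) is L evaluated at the standard unit vector e_n repeated α_n times for each n. Then, with Λ_M = {α : |α| = m and var(α) ≤ M}, one has (∑_{α ∈ Λ_M} |c_α(P)|^{2m/(m+1)})^{(m+1)/(2m)} ≤ e · 2^{M/2} · m^{(M+1)/2} · sup_{‖z‖_∞ ≤ 1} |P(z)|. -/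

import Mathlib

open Finset

/-- The standard unit vector `e_k` in the space `c₀ = C₀(ℕ, ℂ)` of complex null
sequences with the sup norm. -/
noncomputable def c0UnitVector (k : ℕ) : ZeroAtInftyContinuousMap ℕ ℂ where
  toFun := Pi.single k 1
  continuous_toFun := continuous_of_discreteTopology
  zero_at_infty' := by
    rw [Filter.cocompact_eq_cofinite]
    refine Filter.Tendsto.congr' ?_ tendsto_const_nhds
    filter_upwards [Filter.eventually_cofinite_ne k] with x hx
    simp [Pi.single_eq_of_ne hx]


lemma bh_avg_zpow (k : ℤ) (hk : k ≠ 0) :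
    Real.circleAverage (fun z : ℂ => z ^ k) 0 1 = 0 := by
  rw [Real.circleAverage_eq_circleIntegral one_ne_zero]
  have : (∮ z in C((0:ℂ), 1), (z - 0)⁻¹ • z ^ k) = ∮ z in C((0:ℂ), 1), (z - 0) ^ (k - 1) := by
    refine circleIntegral.integral_congr zero_le_one fun z hz => ?_
    have hz0 : z ≠ 0 := by
      rintro rfl; simp at hz
    simp only [sub_zero, smul_eq_mul]
    rw [zpow_sub_one₀ hz0]; ring
  rw [this, circleIntegral.integral_sub_zpow_of_ne (by omega)]; simp

lemma bh_cont_zpow (a : ℂ) (k : ℤ) :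
    ContinuousOn (fun z : ℂ => a * z ^ k) (Metric.sphere 0 1) := by
  have : ContinuousOn (fun z : ℂ => z ^ k) (Metric.sphere 0 1) := by
    refine ContinuousOn.zpow₀ continuousOn_id _ ?_
    intro z hz; left; rintro h
    have h' : z = 0 := h
    simp [h'] at hz
  fun_prop

lemma bh_avg_coeff {d : ℕ} (a : Fin (d + 1) → ℂ) (j : Fin (d + 1)) :
    Real.circleAverage (fun z : ℂ => ∑ l, a l * z ^ ((l : ℤ) - (j : ℤ))) 0 1 = a j := by
  have hint : ∀ l : Fin (d+1), CircleIntegrable (fun z : ℂ => a l * z ^ ((l : ℤ) - (j : ℤ))) 0 1 := by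
    intro l
    refine ContinuousOn.circleIntegrable zero_le_one ?_
    exact bh_cont_zpow _ _
  rw [Real.circleAverage_fun_sum (fun l _ => hint l)]
  rw [Finset.sum_eq_single j]
  · simp [Real.circleAverage_const]
  · intro l _ hl
    have := Real.circleAverage_fun_smul (a := a l) (f := fun z : ℂ => z ^ ((l : ℤ) - (j : ℤ)))
      (c := 0) (R := 1)
    simp only [smul_eq_mul] at this
    rw [this, bh_avg_zpow, mul_zero]
    intro h; apply hl; ext; omega
  · simp

lemma bh_norm_avg_le (f : ℂ → ℂ) :
    ‖Real.circleAverage f 0 1‖ ≤ Real.circleAverage (fun z => ‖f z‖) 0 1 := by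
  unfold Real.circleAverage
  rw [norm_smul, smul_eq_mul, Real.norm_of_nonneg (by positivity)]
  gcongr
  exact intervalIntegral.norm_integral_le_integral_norm (by positivity)

lemma bh_moebius {d : ℕ} (a : Fin (d + 1) → ℂ) (j : Fin (d + 1)) (hj : j ≠ 0) (β : ℂ)
    (hβ : ‖β‖ < 1) :
    ‖(1 - (‖β‖:ℂ) ^ 2) * a 0 + β * a j‖ ≤
      Real.circleAverage (fun z : ℂ => ‖∑ l, a l * z ^ (l : ℕ)‖) 0 1 := by
  have hj0 : (j : ℕ) ≠ 0 := fun h => hj (Fin.ext h)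
  have hden : ∀ z ∈ Metric.closedBall (0:ℂ) 1, 1 + (starRingEnd ℂ) β * z ^ (j:ℕ) ≠ 0 := by
    intro z hz h
    have hz1 : ‖z‖ ≤ 1 := by simpa using hz
    have : ‖(starRingEnd ℂ) β * z ^ (j:ℕ)‖ < 1 := by
      rw [norm_mul, norm_pow, RCLike.norm_conj]
      calc ‖β‖ * ‖z‖ ^ (j:ℕ) ≤ ‖β‖ * 1 := by gcongr; exact pow_le_one₀ (norm_nonneg _) hz1
        _ < 1 := by simpa using hβ
    have h2 : (starRingEnd ℂ) β * z ^ (j:ℕ) = -1 := by linear_combination h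
    rw [h2] at this; simp at this
  set f : ℂ → ℂ := fun z => ∑ l, a l * z ^ (l : ℕ) with hf
  have hfd : Differentiable ℂ f := by
    rw [hf]; fun_prop
  have hq : DifferentiableOn ℂ (fun z => f z / (1 + (starRingEnd ℂ) β * z ^ (j:ℕ)))
      (Metric.closedBall 0 1) := by
    refine DifferentiableOn.div hfd.differentiableOn ?_ hden
    fun_prop
  have h2 : Real.circleAverage (fun z => f z / (1 + (starRingEnd ℂ) β * z ^ (j:ℕ))) 0 1 = a 0 := by
    have : DiffContOnCl ℂ (fun z => f z / (1 + (starRingEnd ℂ) β * z ^ (j:ℕ)))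
        (Metric.ball 0 |1|) := by
      apply DifferentiableOn.diffContOnCl
      refine hq.mono ?_
      rw [abs_one]
      exact Metric.closure_ball_subset_closedBall
    rw [this.circleAverage]
    simp only [hf]
    rw [Finset.sum_eq_single 0]
    · simp [hj0]
    · intro l _ hl
      have : (l:ℕ) ≠ 0 := fun h => hl (Fin.ext h)
      simp [this]
    · simp
  have h1 := bh_avg_coeff a j
  have hi1 : CircleIntegrable (fun z : ℂ => β • ∑ l, a l * z ^ ((l : ℤ) - (j : ℤ))) 0 1 := by
    refine ContinuousOn.circleIntegrable zero_le_one ?_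
    have := continuousOn_finsetSum Finset.univ fun l (_ : l ∈ Finset.univ) =>
      bh_cont_zpow (a l) ((l : ℤ) - (j : ℤ))
    exact this.const_smul β
  have hi2 : CircleIntegrable (fun z : ℂ => (1 - (‖β‖:ℂ) ^ 2) •
      (f z / (1 + (starRingEnd ℂ) β * z ^ (j:ℕ)))) 0 1 := by
    refine ContinuousOn.circleIntegrable zero_le_one ?_
    exact (hq.continuousOn.mono Metric.sphere_subset_closedBall).const_smul (1 - (‖β‖:ℂ) ^ 2)
  have h3 := Real.circleAverage_fun_add hi1 hi2
  rw [Real.circleAverage_fun_smul, Real.circleAverage_fun_smul, h1, h2] at h3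
  have h4 : (1 - (‖β‖:ℂ) ^ 2) * a 0 + β * a j = β • a j + (1 - (‖β‖:ℂ) ^ 2) • a 0 := by
    simp [add_comm]
  rw [h4, ← h3]
  refine (bh_norm_avg_le _).trans (le_of_eq ?_)
  apply Real.circleAverage_congr_sphere
  intro z hz
  have hz1 : ‖z‖ = 1 := by simpa using hz
  have hz0 : z ≠ 0 := by rintro rfl; simp at hz1
  have hd := hden z (by simp [hz1])
  have hbb : (‖β‖:ℂ) ^ 2 = β * (starRingEnd ℂ) β := by
    rw [Complex.mul_conj, Complex.normSq_eq_norm_sq]; push_cast; rfl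
  have hsum : ∑ l, a l * z ^ ((l : ℤ) - (j : ℤ)) = f z * (z ^ (j:ℕ))⁻¹ := by
    rw [hf]; simp only; rw [Finset.sum_mul]
    refine Finset.sum_congr rfl fun l _ => ?_
    rw [zpow_sub₀ hz0]; simp [div_eq_mul_inv, mul_assoc]
  have hzc : (z ^ (j:ℕ))⁻¹ = (starRingEnd ℂ) (z ^ (j:ℕ)) := by
    rw [Complex.inv_def, Complex.normSq_eq_norm_sq, norm_pow, hz1]; simp
  have hw0 : z ^ (j:ℕ) ≠ 0 := pow_ne_zero _ hz0
  have key : β • ∑ l, a l * z ^ ((l : ℤ) - (j : ℤ)) + (1 - (‖β‖:ℂ) ^ 2) •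
      (f z / (1 + (starRingEnd ℂ) β * z ^ (j:ℕ))) =
      f z * ((starRingEnd ℂ) (1 + (starRingEnd ℂ) β * z ^ (j:ℕ)) /
        (1 + (starRingEnd ℂ) β * z ^ (j:ℕ))) := by
    rw [hsum, hbb, map_add, map_mul, ← hzc]
    simp only [smul_eq_mul, map_one, Complex.conj_conj]
    clear_value f
    generalize z ^ (j:ℕ) = w at *
    generalize (starRingEnd ℂ) β = γ at *
    have hd2 : 1 + w * γ ≠ 0 := by rwa [mul_comm w γ]
    field_simp
    ring
  simp only
  rw [key, norm_mul, norm_div, RCLike.norm_conj, div_self (norm_ne_zero_iff.2 hd), mul_one]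

lemma bh_scalar_one {d : ℕ} (a : Fin (d + 1) → ℂ) (j : Fin (d + 1)) (hj : j ≠ 0) :
    ‖a 0‖ ^ 2 + ‖a j‖ ^ 2 / 2 ≤
      (Real.circleAverage (fun z : ℂ => ‖∑ l, a l * z ^ (l : ℕ)‖) 0 1) ^ 2 := by
  set A := Real.circleAverage (fun z : ℂ => ‖∑ l, a l * z ^ (l : ℕ)‖) 0 1 with hA
  have key : ∀ t : ℝ, 0 ≤ t → t < 1 → (1 - t ^ 2) * ‖a 0‖ + t * ‖a j‖ ≤ A := by
    intro t ht0 ht1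
    by_cases h0 : a 0 = 0 ∨ a j = 0
    · have h := bh_moebius a j hj t (by rwa [Complex.norm_real, Real.norm_of_nonneg ht0])
      rw [Complex.norm_real, Real.norm_of_nonneg ht0, ← hA] at h
      have e1 : ‖(1 - (t:ℂ) ^ 2)‖ = 1 - t ^ 2 := by
        have : (1 - (t:ℂ) ^ 2) = ((1 - t ^ 2 : ℝ) : ℂ) := by push_cast; rfl
        rw [this, Complex.norm_real, Real.norm_of_nonneg (by nlinarith)]
      rcases h0 with h0 | h0
      · simpa [h0, abs_of_nonneg ht0] using h
      · simpa [h0, e1] using h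
    · push Not at h0
      obtain ⟨h0, h1⟩ := h0
      have n0 : (‖a 0‖ : ℂ) ≠ 0 := by simpa using h0
      have n1 : (‖a j‖ : ℂ) ≠ 0 := by simpa using h1
      set β : ℂ := t * ((a 0 / ‖a 0‖) / (a j / ‖a j‖)) with hβ
      have hβn : ‖β‖ = t := by
        rw [hβ]; simp [h0, h1, abs_of_nonneg ht0]
      have h := bh_moebius a j hj β (by rwa [hβn])
      rw [hβn] at h
      have e : (1 - (t:ℂ) ^ 2) * a 0 + β * a j =
          (((1 - t ^ 2) * ‖a 0‖ + t * ‖a j‖ : ℝ) : ℂ) * (a 0 / ‖a 0‖) := by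
        rw [hβ]; push_cast; field_simp
      rw [e, norm_mul, Complex.norm_real, norm_div] at h
      simp only [Complex.norm_real, norm_norm] at h
      rw [div_self (norm_ne_zero_iff.2 h0), mul_one] at h
      exact (le_abs_self _).trans h
  have x0 := norm_nonneg (a 0)
  have y0 := norm_nonneg (a j)
  have hx : ‖a 0‖ ≤ A := by simpa using key 0 le_rfl one_pos
  have hy : ‖a j‖ ≤ A := by
    by_contra! h
    have hA0 : 0 ≤ A := x0.trans hx
    have hpos : 0 < ‖a j‖ := lt_of_le_of_lt hA0 h
    obtain ⟨t, ht1, ht2⟩ := exists_between ((div_lt_one hpos).2 h)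
    have ht0 : 0 ≤ t := le_trans (by positivity) ht1.le
    have := key t ht0 ht2
    rw [div_lt_iff₀ hpos] at ht1
    have h3 : 0 ≤ (1 - t ^ 2) * ‖a 0‖ := mul_nonneg (by nlinarith) x0
    linarith
  by_cases h : 2 * ‖a 0‖ ≤ ‖a j‖
  · nlinarith
  · push Not at h
    have hx0 : 0 < ‖a 0‖ := by linarith
    have := key (‖a j‖ / (2 * ‖a 0‖)) (by positivity) ((div_lt_one (by positivity)).2 h)
    have e : (1 - (‖a j‖ / (2 * ‖a 0‖)) ^ 2) * ‖a 0‖ + ‖a j‖ / (2 * ‖a 0‖) * ‖a j‖ =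
        ‖a 0‖ + ‖a j‖ ^ 2 / (4 * ‖a 0‖) := by
      field_simp; ring
    rw [e] at this
    have h5 : (‖a 0‖ + ‖a j‖ ^ 2 / (4 * ‖a 0‖)) ^ 2 ≤ A ^ 2 := by gcongr
    refine le_trans ?_ h5
    have e2 : (‖a 0‖ + ‖a j‖ ^ 2 / (4 * ‖a 0‖)) ^ 2 =
        ‖a 0‖ ^ 2 + ‖a j‖ ^ 2 / 2 + (‖a j‖ ^ 2 / (4 * ‖a 0‖)) ^ 2 := by
      field_simp; ring
    rw [e2]
    have := sq_nonneg (‖a j‖ ^ 2 / (4 * ‖a 0‖))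
    linarith

lemma bh_scalar {d : ℕ} (hd : 1 ≤ d) (a : Fin (d + 1) → ℂ) :
    ∑ j : Fin (d + 1), ‖a j‖ ^ 2 / (if j = 0 then 1 else 2 * (d:ℝ)) ≤
      (Real.circleAverage (fun z : ℂ => ‖∑ l, a l * z ^ (l : ℕ)‖) 0 1) ^ 2 := by
  have hd' : (0:ℝ) < d := by exact_mod_cast hd
  rw [Fin.sum_univ_succ]
  simp only [if_true, Fin.succ_ne_zero, if_false]
  have h := Finset.sum_le_sum fun (j : Fin d) (_ : j ∈ Finset.univ) =>
    bh_scalar_one a j.succ (Fin.succ_ne_zero j)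
  rw [Finset.sum_add_distrib] at h
  simp only [Finset.sum_const, Finset.card_univ, Fintype.card_fin, nsmul_eq_mul,
    ← Finset.sum_div] at h ⊢
  set A := (Real.circleAverage (fun z : ℂ => ‖∑ l, a l * z ^ (l : ℕ)‖) 0 1) ^ 2
  set S := ∑ i : Fin d, ‖a i.succ‖ ^ 2
  have : ‖a 0‖ ^ 2 / 1 + S / (2 * (d:ℝ)) = (d * ‖a 0‖ ^ 2 + S / 2) / d := by
    field_simp
  rw [this, div_le_iff₀ hd']
  linarith

/-- vector-valued, family version -/
lemma bh_vector {d : ℕ} (hd : 1 ≤ d) {K ι : Type*} [Fintype K] [Fintype ι]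
    (a : K → ι → Fin (d + 1) → ℂ) (B : ℝ)
    (h : ∀ z : ℂ, ‖z‖ = 1 →
      ∑ k, Real.sqrt (∑ i, ‖∑ l, a k i l * z ^ (l : ℕ)‖ ^ 2) ≤ B) :
    ∑ k, Real.sqrt (∑ i, ∑ j : Fin (d + 1),
      ‖a k i j‖ ^ 2 / (if j = 0 then 1 else 2 * (d:ℝ))) ≤ B := by
  have step : ∀ k, Real.sqrt (∑ i, ∑ j : Fin (d + 1),
      ‖a k i j‖ ^ 2 / (if j = 0 then 1 else 2 * (d:ℝ))) ≤
      Real.circleAverage (fun z => Real.sqrt (∑ i, ‖∑ l, a k i l * z ^ (l : ℕ)‖ ^ 2)) 0 1 := by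
    intro k
    have h1 : Real.sqrt (∑ i, ∑ j : Fin (d + 1),
      ‖a k i j‖ ^ 2 / (if j = 0 then 1 else 2 * (d:ℝ))) ≤ Real.sqrt (∑ i,
      (Real.circleAverage (fun z : ℂ => ‖∑ l, a k i l * z ^ (l : ℕ)‖) 0 1) ^ 2) := by
      apply Real.sqrt_le_sqrt
      exact Finset.sum_le_sum fun i _ => bh_scalar hd (a k i)
    refine h1.trans ?_
    let G : ℂ → EuclideanSpace ℝ ι := fun z => WithLp.toLp 2 fun i => ‖∑ l, a k i l * z ^ (l : ℕ)‖
    have hG : Continuous G := by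
      refine (PiLp.continuous_toLp 2 _).comp ?_
      fun_prop
    have hGi : CircleIntegrable G 0 1 := hG.continuousOn.circleIntegrable zero_le_one
    have hcoord : ∀ i, (Real.circleAverage G 0 1) i =
        Real.circleAverage (fun z : ℂ => ‖∑ l, a k i l * z ^ (l : ℕ)‖) 0 1 := by
      intro i
      exact ((EuclideanSpace.proj (𝕜 := ℝ) i : EuclideanSpace ℝ ι →L[ℝ] ℝ).circleAverage_comp_comm
        hGi).symm
    have hn : ‖Real.circleAverage G 0 1‖ ≤ Real.circleAverage (fun z => ‖G z‖) 0 1 := by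
      unfold Real.circleAverage
      rw [norm_smul, smul_eq_mul, Real.norm_of_nonneg (by positivity)]
      gcongr
      exact intervalIntegral.norm_integral_le_integral_norm (by positivity)
    rw [EuclideanSpace.norm_eq] at hn
    simp only [hcoord, Real.norm_eq_abs, sq_abs] at hn
    refine hn.trans (le_of_eq ?_)
    congr 1
    funext z
    rw [EuclideanSpace.norm_eq]
    simp [G]
  refine (Finset.sum_le_sum fun k _ => step k).trans ?_
  have hc : ∀ k, Continuous fun z : ℂ => Real.sqrt (∑ i, ‖∑ l, a k i l * z ^ (l : ℕ)‖ ^ 2) := by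
    intro k; fun_prop
  rw [← Real.circleAverage_fun_sum fun k _ =>
    (hc k).continuousOn.circleIntegrable zero_le_one]
  apply Real.circleAverage_mono_on_of_le_circle
  · refine ContinuousOn.circleIntegrable zero_le_one (Continuous.continuousOn ?_)
    exact continuous_finsetSum _ fun k _ => hc k
  · intro z hz
    exact h z (by simpa using hz)

noncomputable def bhw (d : ℕ) (j : Fin (d + 1)) : ℝ := if j = 0 then 1 else 2 * (d:ℝ)

lemma bhw_pos {d : ℕ} (hd : 1 ≤ d) (j : Fin (d + 1)) : 0 < bhw d j := by
  have hd' : (0:ℝ) < d := by exact_mod_cast hd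
  unfold bhw; split_ifs <;> positivity

lemma bh_multi {d : ℕ} (hd : 1 ≤ d) {K : Type*} [Fintype K] (N : ℕ) :
    ∀ (c : K → (Fin N → Fin (d + 1)) → ℂ) (B : ℝ)
    (_ : ∀ z : Fin N → ℂ, (∀ i, ‖z i‖ = 1) →
      ∑ k, ‖∑ α, c k α * ∏ i, z i ^ (α i : ℕ)‖ ≤ B),
    ∑ k, Real.sqrt (∑ α, ‖c k α‖ ^ 2 / ∏ i, bhw d (α i)) ≤ B := by
  induction N with
  | zero =>
    intro c B h
    have := h (fun _ => 1) (by simp)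
    simpa [Real.sqrt_sq] using this
  | succ N ih =>
    intro c B h
    have hw : ∀ α : Fin N → Fin (d+1), 0 < ∏ i, bhw d (α i) :=
      fun α => Finset.prod_pos fun i _ => bhw_pos hd _
    have hsq : ∀ α : Fin N → Fin (d+1),
      ‖((Real.sqrt (∏ i, bhw d (α i)) : ℝ) : ℂ)‖ ^ 2 = ∏ i, bhw d (α i) := by
      intro α
      rw [Complex.norm_real, Real.norm_of_nonneg (Real.sqrt_nonneg _), Real.sq_sqrt (hw α).le]
    have := bh_vector hd (fun k (α : Fin N → Fin (d+1)) j =>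
      c k (Fin.cons j α) / ((Real.sqrt (∏ i, bhw d (α i)) : ℝ) : ℂ)) B ?_
    · refine le_trans (le_of_eq ?_) this
      refine Finset.sum_congr rfl fun k _ => ?_
      congr 1
      rw [← (Fin.consEquiv fun _ => Fin (d+1)).sum_comp, Fintype.sum_prod_type, Finset.sum_comm]
      refine Finset.sum_congr rfl fun α _ => Finset.sum_congr rfl fun j _ => ?_
      rw [norm_div, div_pow, hsq, Fin.prod_univ_succ]
      simp only [Fin.consEquiv_apply, Fin.cons_zero, Fin.cons_succ]
      rw [div_div, mul_comm]; rfl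
    · intro z hz
      have h2 := ih (fun k α => ∑ j, c k (Fin.cons j α) * z ^ (j:ℕ)) B ?_
      · refine le_trans (le_of_eq ?_) h2
        refine Finset.sum_congr rfl fun k _ => ?_
        congr 1
        refine Finset.sum_congr rfl fun α _ => ?_
        have e := hsq α
        generalize ((Real.sqrt (∏ i, bhw d (α i)) : ℝ) : ℂ) = s at e ⊢
        rw [← e, ← div_pow, ← norm_div, Finset.sum_div]
        congr 2
        refine Finset.sum_congr rfl fun j _ => ?_
        ring
      · intro w hwz
        refine le_trans (le_of_eq ?_) (h (Fin.cons z w) ?_)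
        · refine Finset.sum_congr rfl fun k _ => ?_
          congr 1
          rw [← (Fin.consEquiv fun _ => Fin (d+1)).sum_comp, Fintype.sum_prod_type, Finset.sum_comm]
          refine Finset.sum_congr rfl fun α _ => ?_
          rw [Finset.sum_mul]
          refine Finset.sum_congr rfl fun j _ => ?_
          rw [Fin.prod_univ_succ]
          simp only [Fin.consEquiv, Equiv.coe_fn_mk, Fin.cons_zero, Fin.cons_succ]
          ring
        · intro i
          refine Fin.cases ?_ (fun i => ?_) i
          · simpa using hz
          · simpa using hwz i

lemma bh_blei_one (m N : ℕ) (b : (Fin m → Fin N) → ℝ) (g : Fin N → ℝ)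
    (hb : ∀ i, 0 ≤ b i) (hg : ∀ k, 0 ≤ g k)
    (hbg : ∀ l k, ∑ i with i l = k, b i ^ 2 = g k ^ 2)
    (hA : ∑ k, g k ≤ 1) (hm : 1 ≤ m) :
    ∑ i, b i ^ ((2 * (m:ℝ)) / ((m:ℝ) + 1)) ≤ 1 := by
  have hm0 : (0:ℝ) < (m:ℝ) + 1 := by positivity
  have hm1 : (0:ℝ) < (m:ℝ) := by exact_mod_cast hm
  have pt : ∀ i, b i ^ ((2 * (m:ℝ)) / ((m:ℝ) + 1)) ≤
      ((m:ℝ) + 1)⁻¹ * (∏ k, g (i k) + ∑ k, b i ^ 2 / g (i k)) := by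
    intro i
    rcases (hb i).eq_or_lt with h0 | hpos
    · rw [← h0, Real.zero_rpow (by positivity)]
      refine mul_nonneg (by positivity) (add_nonneg (prod_nonneg fun k _ => hg _) (by simp))
    have hgp : ∀ k, 0 < g (i k) := by
      intro k
      have h1 : b i ^ 2 ≤ g (i k) ^ 2 := by
        rw [← hbg k (i k)]
        exact Finset.single_le_sum (f := fun i => b i ^ 2) (fun _ _ => sq_nonneg _) (by simp)
      have := abs_le_of_sq_le_sq h1 (hg _)
      have h3 := hg (i k)
      linarith [le_abs_self (b i)]
    have h := Real.geom_mean_le_arith_mean_weighted (Finset.univ : Finset (Fin (m+1)))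
      (fun _ => ((m:ℝ)+1)⁻¹) (Fin.cons (∏ k, g (i k)) (fun k => b i ^ 2 / g (i k)))
      (fun _ _ => by positivity) (by simp; field_simp) (by
        intro k _
        refine Fin.cases ?_ (fun k => ?_) k
        · simpa using prod_nonneg fun k _ => hg _
        · simpa using div_nonneg (sq_nonneg _) (hg _))
    rw [← Finset.mul_sum, Fin.sum_univ_succ, Fin.prod_univ_succ] at h
    simp only [Fin.cons_zero, Fin.cons_succ] at h
    refine le_trans (le_of_eq ?_) h
    rw [Real.finsetProd_rpow _ _ (fun k _ => div_nonneg (sq_nonneg _) (hg _)),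
      ← Real.mul_rpow (prod_nonneg fun k _ => hg _)
        (prod_nonneg fun k _ => div_nonneg (sq_nonneg _) (hg _)),
      Finset.prod_div_distrib, mul_div_cancel₀ _ (Finset.prod_pos fun k _ => hgp k).ne']
    simp only [Finset.prod_const, Finset.card_univ, Fintype.card_fin]
    rw [← pow_mul, ← Real.rpow_natCast, ← Real.rpow_mul (hb i)]
    push_cast
    rfl
  refine (Finset.sum_le_sum fun i _ => pt i).trans ?_
  rw [← Finset.mul_sum, Finset.sum_add_distrib, Finset.sum_comm, ← Fintype.sum_pow]
  have h2 : ∀ k : Fin m, ∑ i, b i ^ 2 / g (i k) = ∑ x, g x := by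
    intro k
    rw [← Finset.sum_fiberwise _ (fun i : Fin m → Fin N => i k)]
    refine Finset.sum_congr rfl fun x _ => ?_
    have : ∑ i with i k = x, b i ^ 2 / g (i k) = ∑ i with i k = x, b i ^ 2 / g x := by
      refine Finset.sum_congr rfl fun i hi => ?_
      rw [(Finset.mem_filter.1 hi).2]
    rw [this, ← Finset.sum_div, hbg k x, sq, mul_self_div_self]
  simp only [h2, Finset.sum_const, Finset.card_univ, Fintype.card_fin, nsmul_eq_mul]
  have hS : 0 ≤ ∑ x, g x := sum_nonneg fun k _ => hg k
  have h3 : (∑ x, g x) ^ m ≤ 1 := pow_le_one₀ hS hA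
  rw [inv_mul_le_iff₀ hm0]
  nlinarith

lemma bh_blei (m N : ℕ) (b : (Fin m → Fin N) → ℝ) (g : Fin N → ℝ)
    (hb : ∀ i, 0 ≤ b i) (hg : ∀ k, 0 ≤ g k)
    (hbg : ∀ l k, ∑ i with i l = k, b i ^ 2 = g k ^ 2) (A : ℝ)
    (hA : ∑ k, g k ≤ A) (hm : 1 ≤ m) :
    ∑ i, b i ^ ((2 * (m:ℝ)) / ((m:ℝ) + 1)) ≤ A ^ ((2 * (m:ℝ)) / ((m:ℝ) + 1)) := by
  have hm1 : (0:ℝ) < (m:ℝ) := by exact_mod_cast hm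
  have hS : 0 ≤ ∑ x, g x := sum_nonneg fun k _ => hg k
  rcases (hS.trans hA).eq_or_lt with h0 | hpos
  · have hS0 : ∑ x, g x = 0 := by linarith
    rw [Finset.sum_eq_zero_iff_of_nonneg (fun k _ => hg k)] at hS0
    have hb0 : ∀ i, b i = 0 := by
      intro i
      have h1 : b i ^ 2 ≤ g (i ⟨0, hm⟩) ^ 2 := by
        rw [← hbg ⟨0, hm⟩ (i ⟨0, hm⟩)]
        exact Finset.single_le_sum (f := fun i => b i ^ 2) (fun _ _ => sq_nonneg _) (by simp)
      rw [hS0 _ (mem_univ _)] at h1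
      have := hb i
      nlinarith
    simp only [hb0, ← h0]
    rw [Real.zero_rpow (by positivity)]; simp
  · have := bh_blei_one m N (fun i => b i / A) (fun k => g k / A)
      (fun i => div_nonneg (hb i) hpos.le) (fun k => div_nonneg (hg k) hpos.le)
      (by intro l k; simp only [div_pow, ← Finset.sum_div, hbg])
      (by rw [← Finset.sum_div]; exact (div_le_one hpos).2 hA) hm
    simp only [Real.div_rpow (hb _) hpos.le] at this
    rw [← Finset.sum_div, div_le_one (Real.rpow_pos_of_pos hpos _)] at this
    exact this

def bhcnt {m N : ℕ} (i : Fin m → Fin N) (r : Fin N) : ℕ := (univ.filter fun l => i l = r).card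

def bhfib {m N : ℕ} (i : Fin m → Fin N) : ℕ :=
  (univ.filter fun i' : Fin m → Fin N => bhcnt i' = bhcnt i).card

lemma bhcnt_comp {m N : ℕ} (i : Fin m → Fin N) (σ : Equiv.Perm (Fin m)) :
    bhcnt (i ∘ σ) = bhcnt i := by
  funext r
  unfold bhcnt
  refine Finset.card_bij (fun l _ => σ l) ?_ ?_ ?_
  · intro l hl; simpa using hl
  · intro a _ b _ h; exact σ.injective h
  · intro l hl; exact ⟨σ.symm l, by simpa using hl, by simp⟩

lemma bh_fact_le {m N : ℕ} (i : Fin m → Fin N) :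
    m.factorial ≤ (∏ r, (bhcnt i r).factorial) * bhfib i := by
  have h := Finset.card_le_mul_card_image_of_maps_to (s := (univ : Finset (Equiv.Perm (Fin m))))
    (t := univ.filter fun i' : Fin m → Fin N => bhcnt i' = bhcnt i) (f := fun σ : Equiv.Perm (Fin m) => i ∘ σ)
    (by intro σ _; simp [bhcnt_comp]) (∏ r, (bhcnt i r).factorial) ?_
  · simpa [Fintype.card_perm, bhfib] using h
  · intro j _
    by_cases hj : ∃ σ₀ : Equiv.Perm (Fin m), i ∘ σ₀ = j
    · obtain ⟨σ₀, rfl⟩ := hj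
      have h1 := DomMulAct.stabilizer_card i
      have h2 : ∏ r, (bhcnt i r).factorial =
        Fintype.card {g : Equiv.Perm (Fin m) // i ∘ g = i} := by
        rw [h1]
        refine Finset.prod_congr rfl fun r _ => ?_
        rw [Fintype.card_subtype]; rfl
      rw [h2, Fintype.card_subtype]
      refine Finset.card_le_card_of_injOn (fun σ : Equiv.Perm (Fin m) => σ₀.symm.trans σ) ?_ ?_
      · intro σ hσ
        simp only [coe_filter, mem_univ, true_and, Set.mem_ofPred_eq] at hσ ⊢
        funext x
        have := congrFun hσ (σ₀.symm x)
        simpa using this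
      · intro a _ b _ hab
        ext x
        have := congrArg (fun e : Equiv.Perm (Fin m) => e (σ₀ x)) hab
        simpa using congrArg Fin.val this
    · push Not at hj
      rw [Finset.filter_false_of_mem (fun σ _ => hj σ)]
      simp

noncomputable def bhmu {m N : ℕ} (i : Fin m → Fin N) : ℝ :=
  (m.factorial : ℝ) / ∏ r, ((bhcnt i r).factorial : ℝ)

lemma bhmu_le_fib {m N : ℕ} (i : Fin m → Fin N) : bhmu i ≤ bhfib i := by
  unfold bhmu
  rw [div_le_iff₀ (by positivity)]
  have := bh_fact_le i
  rw [mul_comm]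
  exact_mod_cast this

lemma bhmu_cons {m N : ℕ} (k : Fin N) (j : Fin m → Fin N) :
    bhmu (Fin.cons k j : Fin (m+1) → Fin N) ≤ ((m:ℝ) + 1) * bhmu j := by
  unfold bhmu
  rw [Nat.factorial_succ, ← mul_div_assoc]
  push_cast
  gcongr with r hr
  unfold bhcnt
  rw [← Finset.card_map (Fin.succEmb m)]
  apply Finset.card_le_card
  intro x hx
  simp only [mem_map, mem_filter, mem_univ, true_and] at hx ⊢
  obtain ⟨y, hy, rfl⟩ := hx
  simpa using hy

lemma bh_harris {E : Type*} [NormedAddCommGroup E] [NormedSpace ℂ E] (n : ℕ) (hn : 1 ≤ n)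
    (L : ContinuousMultilinearMap ℂ (fun _ : Fin (n + 1) => E) ℂ)
    (hsym : ∀ (σ : Equiv.Perm (Fin (n + 1))) (z : Fin (n + 1) → E), L (z ∘ σ) = L z)
    (C : ℝ) (hC : ∀ z : E, ‖z‖ ≤ 1 → ‖L fun _ => z‖ ≤ C) (z w : E) (hz : ‖z‖ ≤ 1) (hw : ‖w‖ ≤ 1) :
    ‖L (Fin.cons w fun _ => z)‖ ≤ Real.exp 1 * C := by
  have hn0 : (0:ℝ) < n := by exact_mod_cast hn
  have hC0 : 0 ≤ C := (norm_nonneg _).trans (hC 0 (by simp))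
  have hpath : ∀ x : ℂ, HasDerivAt (fun (t : ℂ) (_ : Fin (n+1)) => z + t • w) (fun _ => w) x := by
    intro x
    rw [hasDerivAt_pi]
    intro i
    simpa using ((hasDerivAt_id x).smul_const w).const_add z
  have hp : ∀ x : ℂ, HasDerivAt (fun t : ℂ => L (fun _ => z + t • w))
      (L.linearDeriv (fun _ => z + x • w) (fun _ => w)) x := fun x =>
    (L.hasFDerivAt _).comp_hasDerivAt x (hpath x)
  have hd0 : deriv (fun t : ℂ => L (fun _ => z + t • w)) 0 =
      ((n:ℂ) + 1) * L (Fin.cons w fun _ => z) := by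
    rw [(hp 0).deriv, ContinuousMultilinearMap.linearDeriv_apply]
    have : ∀ l : Fin (n+1), L (Function.update (fun _ => z + (0:ℂ) • w) l w) =
        L (Fin.cons w fun _ => z) := by
      intro l
      rw [← hsym (Equiv.swap 0 l) (Fin.cons w fun _ => z)]
      congr 1
      funext x
      by_cases hx : x = l
      · subst hx; simp
      · rw [Function.update_of_ne hx]
        simp only [zero_smul, add_zero, Function.comp_apply]
        have : Equiv.swap 0 l x ≠ 0 := by
          intro h
          rw [Equiv.swap_apply_eq_iff, Equiv.swap_apply_left] at h
          exact hx h
        obtain ⟨y, hy⟩ := Fin.exists_succ_eq.2 this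
        rw [← hy, Fin.cons_succ]
    simp only [this]
    simp
  have hbd : ∀ t ∈ Metric.sphere (0:ℂ) (1 / n), ‖L (fun _ => z + t • w)‖ ≤
      (1 + 1 / (n:ℝ)) ^ (n + 1) * C := by
    intro t ht
    have ht' : ‖t‖ = 1 / n := by simpa using ht
    set r : ℝ := 1 + 1 / (n:ℝ) with hr
    have hr0 : 0 < r := by positivity
    have hnorm : ‖z + t • w‖ ≤ r := by
      refine (norm_add_le _ _).trans ?_
      rw [norm_smul, ht']
      have : 1 / (n:ℝ) * ‖w‖ ≤ 1 / (n:ℝ) * 1 := by gcongr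
      linarith
    have hrc : (r:ℂ) ≠ 0 := by exact_mod_cast hr0.ne'
    have e : (fun _ : Fin (n+1) => z + t • w) =
        fun i => (fun _ : Fin (n+1) => (r:ℂ)) i • ((fun _ : Fin (n+1) => (r:ℂ)⁻¹ • (z + t • w)) i) := by
      funext i; simp only; rw [smul_smul, mul_inv_cancel₀ hrc, one_smul]
    rw [e, L.map_smul_univ]
    simp only [prod_const, card_univ, Fintype.card_fin, smul_eq_mul, norm_mul, norm_pow,
      Complex.norm_real, Real.norm_of_nonneg hr0.le]
    gcongr
    apply hC
    rw [norm_smul, norm_inv, Complex.norm_real, Real.norm_of_nonneg hr0.le]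
    rw [inv_mul_le_iff₀ hr0]; simpa using hnorm
  have hdiff : Differentiable ℂ (fun t : ℂ => L (fun _ => z + t • w)) :=
    fun x => (hp x).differentiableAt
  have h := Complex.norm_deriv_le_of_forall_mem_sphere_norm_le (by positivity)
    hdiff.diffContOnCl hbd
  rw [hd0, norm_mul] at h
  have e1 : ‖((n:ℂ) + 1)‖ = (n:ℝ) + 1 := by
    have : ((n:ℂ) + 1) = ((n + 1 : ℕ) : ℂ) := by push_cast; rfl
    rw [this, Complex.norm_natCast]; push_cast; rfl
  rw [e1] at h
  have e2 : (1 + 1 / (n:ℝ)) ^ (n + 1) * C / (1 / (n:ℝ)) =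
      ((n:ℝ) + 1) * ((1 + 1 / (n:ℝ)) ^ n * C) := by
    rw [pow_succ]; field_simp
  rw [e2] at h
  have h2 := le_of_mul_le_mul_left h (by positivity)
  refine h2.trans ?_
  gcongr
  have h3 : 1 + 1 / (n:ℝ) ≤ Real.exp (1 / n) := by
    rw [add_comm]; exact Real.add_one_le_exp _
  calc (1 + 1 / (n:ℝ)) ^ n ≤ Real.exp (1 / n) ^ n := by gcongr
    _ = Real.exp 1 := by rw [← Real.exp_nat_mul]; congr 1; field_simp
def bhvar {m N : ℕ} (i : Fin m → Fin N) : ℕ := (univ.filter fun r => bhcnt i r ≠ 0).card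

lemma bhcnt_lt {m N : ℕ} (i : Fin m → Fin N) (r : Fin N) : bhcnt i r < m + 1 := by
  unfold bhcnt
  have := Finset.card_le_univ (univ.filter fun l => i l = r)
  simp only [Fintype.card_fin] at this
  omega

def bhcntF {m N : ℕ} (i : Fin m → Fin N) (r : Fin N) : Fin (m + 1) := ⟨bhcnt i r, bhcnt_lt i r⟩

lemma bhcntF_eq_iff {m N : ℕ} (i i' : Fin m → Fin N) :
    bhcntF i = bhcntF i' ↔ bhcnt i = bhcnt i' := by
  constructor
  · intro h; funext r; exact congrArg Fin.val (congrFun h r)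
  · intro h; funext r; exact Fin.ext (congrFun h r)

lemma bhcnt_cons {m N : ℕ} (k : Fin N) (j : Fin m → Fin N) (r : Fin N) :
    bhcnt (Fin.cons k j : Fin (m+1) → Fin N) r = (if k = r then 1 else 0) + bhcnt j r := by
  unfold bhcnt
  simp only [Finset.card_filter, Fin.sum_univ_succ, Fin.cons_zero, Fin.cons_succ]

lemma bhvar_cons {m N : ℕ} (k : Fin N) (j : Fin m → Fin N) :
    bhvar j ≤ bhvar (Fin.cons k j : Fin (m+1) → Fin N) := by
  unfold bhvar
  apply Finset.card_le_card
  intro r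
  simp only [mem_filter, mem_univ, true_and, bhcnt_cons]
  omega

lemma bhfib_pos {m N : ℕ} (i : Fin m → Fin N) : 0 < bhfib i := by
  unfold bhfib
  exact Finset.card_pos.2 ⟨i, by simp⟩

lemma bhmu_pos {m N : ℕ} (i : Fin m → Fin N) : 0 < bhmu i := by
  unfold bhmu; positivity

lemma bh_mono {m N : ℕ} (z : Fin N → ℂ) (j : Fin m → Fin N) :
    ∏ l, z (j l) = ∏ r, z r ^ bhcnt j r := by
  rw [← Finset.prod_fiberwise univ j]
  refine Finset.prod_congr rfl fun r _ => ?_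
  unfold bhcnt
  rw [Finset.prod_congr rfl (g := fun _ => z r), Finset.prod_const]
  intro l hl
  rw [(Finset.mem_filter.1 hl).2]

lemma bhw_prod {n N : ℕ} (j : Fin n → Fin N) :
    ∏ r, bhw n (bhcntF j r) = (2 * (n:ℝ)) ^ bhvar j := by
  unfold bhw bhvar
  have : ∀ r, (if bhcntF j r = 0 then (1:ℝ) else 2 * (n:ℝ)) =
    if bhcnt j r ≠ 0 then 2 * (n:ℝ) else 1 := by
    intro r
    have : bhcntF j r = 0 ↔ bhcnt j r = 0 := by
      rw [Fin.ext_iff]; rfl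
    simp only [this, ite_not, ne_eq]
  simp only [this]
  rw [Finset.prod_ite]
  simp

lemma bh_inner (n N M : ℕ) (hn : 1 ≤ n) (a : (Fin n → Fin N) → ℂ)
    (ha : ∀ i i', bhcnt i = bhcnt i' → a i = a i') :
    ∑ j, (if bhvar j ≤ M then (bhfib j : ℝ) * ‖a j‖ ^ 2 else 0) ≤
      (2 * (n:ℝ)) ^ M * ∑ β : Fin N → Fin (n+1),
        ‖∑ j with bhcntF j = β, a j‖ ^ 2 / ∏ r, bhw n (β r) := by
  have hn1 : (1:ℝ) ≤ n := by exact_mod_cast hn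
  rw [← Finset.sum_fiberwise _ (fun j : Fin n → Fin N => bhcntF j), Finset.mul_sum]
  refine Finset.sum_le_sum fun β _ => ?_
  by_cases hβ : ∃ j0 : Fin n → Fin N, bhcntF j0 = β
  · obtain ⟨j0, rfl⟩ := hβ
    have hfib : ∀ j : Fin n → Fin N, bhcntF j = bhcntF j0 → bhfib j = bhfib j0 := by
      intro j hj
      unfold bhfib
      rw [(bhcntF_eq_iff _ _).1 hj]
    have hvar : ∀ j : Fin n → Fin N, bhcntF j = bhcntF j0 → bhvar j = bhvar j0 := by
      intro j hj
      unfold bhvar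
      rw [(bhcntF_eq_iff _ _).1 hj]
    have hcard : #{j : Fin n → Fin N | bhcntF j = bhcntF j0} = bhfib j0 := by
      unfold bhfib
      simp only [bhcntF_eq_iff]
    have e1 : ∑ j with bhcntF j = bhcntF j0, a j = (bhfib j0 : ℂ) * a j0 := by
      rw [Finset.sum_congr rfl (g := fun _ => a j0), Finset.sum_const, nsmul_eq_mul, hcard]
      intro j hj
      exact ha _ _ ((bhcntF_eq_iff _ _).1 (Finset.mem_filter.1 hj).2)
    have e2 : ∑ j with bhcntF j = bhcntF j0,
        (if bhvar j ≤ M then (bhfib j : ℝ) * ‖a j‖ ^ 2 else 0) =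
        (bhfib j0 : ℝ) * (if bhvar j0 ≤ M then (bhfib j0 : ℝ) * ‖a j0‖ ^ 2 else 0) := by
      rw [Finset.sum_congr rfl (g := fun _ =>
        (if bhvar j0 ≤ M then (bhfib j0 : ℝ) * ‖a j0‖ ^ 2 else 0)), Finset.sum_const,
        nsmul_eq_mul, hcard]
      intro j hj
      have hj' := (Finset.mem_filter.1 hj).2
      rw [hvar j hj', hfib j hj', ha j j0 ((bhcntF_eq_iff _ _).1 hj')]
    rw [e1, e2, bhw_prod, norm_mul, Complex.norm_natCast]
    split_ifs with h
    · rw [← mul_div_assoc, le_div_iff₀ (by positivity)]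
      have : (2 * (n:ℝ)) ^ bhvar j0 ≤ (2 * (n:ℝ)) ^ M := pow_le_pow_right₀ (by linarith) h
      calc (bhfib j0 : ℝ) * ((bhfib j0 : ℝ) * ‖a j0‖ ^ 2) * (2 * (n:ℝ)) ^ bhvar j0
          = (2 * (n:ℝ)) ^ bhvar j0 * ((bhfib j0 : ℝ) * ‖a j0‖) ^ 2 := by ring
        _ ≤ _ := by gcongr
    · rw [mul_zero]; positivity
  · push Not at hβ
    rw [Finset.filter_false_of_mem (fun j _ => hβ j)]
    simp

lemma bh_core (n N M : ℕ) (hn : 1 ≤ n) (a : (Fin (n+1) → Fin N) → ℂ)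
    (ha : ∀ i i', bhcnt i = bhcnt i' → a i = a i') (B : ℝ)
    (hB : ∀ z : Fin N → ℂ, (∀ r, ‖z r‖ = 1) →
      ∑ k, ‖∑ j : Fin n → Fin N, a (Fin.cons k j) * ∏ l, z (j l)‖ ≤ B) :
    ∑ i, (if bhvar i ≤ M then (bhfib i : ℝ)⁻¹ * (bhmu i * ‖a i‖) ^
        ((2 * ((n:ℝ) + 1)) / ((n:ℝ) + 2)) else 0) ≤
      (Real.sqrt (((n:ℝ) + 1) * (2 * (n:ℝ)) ^ M) * B) ^ ((2 * ((n:ℝ) + 1)) / ((n:ℝ) + 2)) := by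
  set p : ℝ := (2 * ((n:ℝ) + 1)) / ((n:ℝ) + 2) with hp
  have hp0 : 0 < p := by positivity
  let b : (Fin (n+1) → Fin N) → ℝ := fun i =>
    if bhvar i ≤ M then (bhfib i : ℝ) ^ (-p⁻¹) * (bhmu i * ‖a i‖) else 0
  have hbc : ∀ i i', bhcnt i = bhcnt i' → b i = b i' := by
    intro i i' h
    have h1 : bhvar i = bhvar i' := by unfold bhvar; rw [h]
    have h2 : bhfib i = bhfib i' := by unfold bhfib; rw [h]
    have h3 : bhmu i = bhmu i' := by unfold bhmu; rw [h]
    simp only [b, h1, h2, h3, ha i i' h]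
  have hb : ∀ i, 0 ≤ b i := by
    intro i
    have := bhmu_pos i
    simp only [b]; split_ifs <;> positivity
  let g : Fin N → ℝ := fun k => Real.sqrt (∑ i with i 0 = k, b i ^ 2)
  have hbg : ∀ l k, ∑ i with i l = k, b i ^ 2 = g k ^ 2 := by
    intro l k
    simp only [g]
    rw [Real.sq_sqrt (Finset.sum_nonneg fun _ _ => sq_nonneg _)]
    refine Finset.sum_bij' (fun i _ => i ∘ Equiv.swap 0 l) (fun i _ => i ∘ Equiv.swap 0 l)
      ?_ ?_ ?_ ?_ ?_
    · intro i hi; simpa using hi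
    · intro i hi; simpa using hi
    · intro i hi; funext x; simp
    · intro i hi; funext x; simp
    · intro i hi; rw [hbc _ _ (bhcnt_comp i _)]
  have hHel := bh_multi hn N (fun k β => ∑ j with bhcntF j = β, a (Fin.cons k j)) B (by
    intro z hz
    refine le_trans (le_of_eq ?_) (hB z hz)
    refine Finset.sum_congr rfl fun k _ => ?_
    congr 1
    rw [← Finset.sum_fiberwise univ (fun j : Fin n → Fin N => bhcntF j)
      (fun j => a (Fin.cons k j) * ∏ l, z (j l))]
    refine Finset.sum_congr rfl fun β _ => ?_
    rw [Finset.sum_mul]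
    refine Finset.sum_congr rfl fun j hj => ?_
    rw [← (Finset.mem_filter.1 hj).2, bh_mono]
    rfl)
  have hgk : ∀ k, g k ≤ Real.sqrt (((n:ℝ) + 1) * (2 * (n:ℝ)) ^ M) *
      Real.sqrt (∑ β : Fin N → Fin (n+1),
        ‖∑ j with bhcntF j = β, a (Fin.cons k j)‖ ^ 2 / ∏ r, bhw n (β r)) := by
    intro k
    rw [← Real.sqrt_mul (by positivity)]
    apply Real.sqrt_le_sqrt
    have e : ∑ i with i 0 = k, b i ^ 2 = ∑ j : Fin n → Fin N, b (Fin.cons k j) ^ 2 := by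
      rw [Finset.sum_filter, ← (Fin.consEquiv fun _ => Fin N).sum_comp, Fintype.sum_prod_type]
      simp only [Fin.consEquiv, Equiv.coe_fn_mk, Fin.cons_zero]
      rw [Finset.sum_eq_single k]
      · simp
      · intro x _ hx; simp [hx]
      · simp
    rw [e]
    have hin := bh_inner n N M hn (fun j => a (Fin.cons k j)) (by
      intro i i' h
      apply ha
      funext r
      rw [bhcnt_cons, bhcnt_cons, h])
    rw [mul_assoc]
    refine le_trans ?_ (mul_le_mul_of_nonneg_left hin (by positivity))
    rw [Finset.mul_sum]
    refine Finset.sum_le_sum fun j _ => ?_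
    simp only [b]
    set i : Fin (n+1) → Fin N := Fin.cons k j with hi
    by_cases hv : bhvar i ≤ M
    · rw [if_pos hv, if_pos ((bhvar_cons k j).trans hv)]
      have hF : (1:ℝ) ≤ bhfib i := by exact_mod_cast bhfib_pos i
      have hF0 : (0:ℝ) < bhfib i := by linarith
      have h1 : ((bhfib i : ℝ) ^ (-p⁻¹)) ^ 2 ≤ (bhfib i : ℝ)⁻¹ := by
        rw [← Real.rpow_natCast, ← Real.rpow_mul hF0.le, ← Real.rpow_neg_one (bhfib i : ℝ)]
        apply Real.rpow_le_rpow_of_exponent_le hF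
        push_cast
        have : p ≤ 2 := by
          rw [hp, div_le_iff₀ (by positivity)]; linarith
        have : 1 ≤ p⁻¹ * 2 := by
          rw [inv_mul_eq_div, le_div_iff₀ hp0]; linarith
        linarith
      have hm0 := bhmu_pos i
      have h2 : bhmu i * (bhfib i : ℝ)⁻¹ ≤ 1 := by
        rw [← div_eq_mul_inv, div_le_one hF0]; exact bhmu_le_fib i
      have h3 : bhmu i ≤ ((n:ℝ) + 1) * bhfib j :=
        (bhmu_cons k j).trans (by gcongr; exact bhmu_le_fib j)
      calc ((bhfib i : ℝ) ^ (-p⁻¹) * (bhmu i * ‖a i‖)) ^ 2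
          = ((bhfib i : ℝ) ^ (-p⁻¹)) ^ 2 * (bhmu i * ‖a i‖) ^ 2 := by ring
        _ ≤ (bhfib i : ℝ)⁻¹ * (bhmu i * ‖a i‖) ^ 2 := by gcongr
        _ = (bhmu i * (bhfib i : ℝ)⁻¹) * (bhmu i * ‖a i‖ ^ 2) := by ring
        _ ≤ 1 * ((((n:ℝ) + 1) * bhfib j) * ‖a i‖ ^ 2) := by gcongr
        _ = _ := by ring
    · rw [if_neg hv]
      have : (0:ℝ) ≤ if bhvar j ≤ M then (bhfib j : ℝ) * ‖a i‖ ^ 2 else 0 := by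
        split_ifs <;> positivity
      have h4 : (0:ℝ) ≤ (n:ℝ) + 1 := by positivity
      simpa using mul_nonneg h4 this
  have hA : ∑ k, g k ≤ Real.sqrt (((n:ℝ) + 1) * (2 * (n:ℝ)) ^ M) * B := by
    refine (Finset.sum_le_sum fun k _ => hgk k).trans ?_
    rw [← Finset.mul_sum]
    gcongr
  have hfin := bh_blei (n+1) N b g hb (fun k => Real.sqrt_nonneg _) hbg _ hA (by omega)
  have hpe : (2 * ((n+1 : ℕ):ℝ)) / (((n+1 : ℕ):ℝ) + 1) = p := by
    rw [hp]; push_cast; congr 1; ring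
  rw [hpe] at hfin
  refine le_trans (le_of_eq ?_) hfin
  refine Finset.sum_congr rfl fun i _ => ?_
  simp only [b]
  have hm0 := bhmu_pos i
  split_ifs
  · rw [Real.mul_rpow (x := (bhfib i : ℝ) ^ (-p⁻¹)) (y := bhmu i * ‖a i‖) (by positivity) (by positivity),
      ← Real.rpow_mul (by positivity),
      neg_mul, inv_mul_cancel₀ hp0.ne', Real.rpow_neg_one]
  · rw [Real.zero_rpow hp0.ne']

lemma bh_sup_le {n : ℕ} (L : ContinuousMultilinearMap ℂ
      (fun _ : Fin (n + 1) => ZeroAtInftyContinuousMap ℕ ℂ) ℂ)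
    (z : ZeroAtInftyContinuousMap ℕ ℂ) (hz : ‖z‖ ≤ 1) :
    ‖L fun _ => z‖ ≤ ⨆ z ∈ {z : ZeroAtInftyContinuousMap ℕ ℂ | ‖z‖ ≤ 1}, ‖L fun _ => z‖ := by
  have hb : ∀ w : ZeroAtInftyContinuousMap ℕ ℂ, ‖w‖ ≤ 1 → ‖L fun _ => w‖ ≤ ‖L‖ := by
    intro w hw
    refine (L.le_opNorm _).trans ?_
    have : ∏ _i : Fin (n+1), ‖w‖ ≤ 1 :=
      Finset.prod_le_one (fun _ _ => norm_nonneg _) (fun _ _ => hw)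
    exact mul_le_of_le_one_right (norm_nonneg _) this
  have h1 : BddAbove (Set.range fun w : ZeroAtInftyContinuousMap ℕ ℂ =>
      ⨆ (_ : w ∈ {z : ZeroAtInftyContinuousMap ℕ ℂ | ‖z‖ ≤ 1}), ‖L fun _ => w‖) := by
    refine ⟨‖L‖, ?_⟩
    rintro _ ⟨w, rfl⟩
    exact Real.iSup_le (fun hw => hb w hw) L.opNorm_nonneg
  refine le_trans ?_ (le_ciSup h1 z)
  have hz' : z ∈ {z : ZeroAtInftyContinuousMap ℕ ℂ | ‖z‖ ≤ 1} := hz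
  exact le_of_eq (ciSup_pos (f := fun _ => ‖L fun _ => z‖) hz').symm

lemma bh_norm_comb {N : ℕ} (u : Fin N → ℂ) (hu : ∀ k, ‖u k‖ ≤ 1) :
    ‖∑ k : Fin N, u k • c0UnitVector k‖ ≤ 1 := by
  rw [← ZeroAtInftyContinuousMap.norm_toBCF_eq_norm, BoundedContinuousFunction.norm_le zero_le_one]
  intro x
  have h : (∑ k : Fin N, u k • c0UnitVector k) x = ∑ k : Fin N, u k * c0UnitVector k x := by
    have : ∀ s : Finset (Fin N), (∑ k ∈ s, u k • c0UnitVector k) x = ∑ k ∈ s, u k * c0UnitVector k x := by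
      intro s
      induction s using Finset.induction_on with
      | empty => simp
      | insert a s ha ih => rw [Finset.sum_insert ha, Finset.sum_insert ha, ← ih]; rfl
    exact this univ
  change ‖(∑ k : Fin N, u k • c0UnitVector k) x‖ ≤ 1
  rw [h]
  have h2 : ∀ k : Fin N, c0UnitVector k x = if x = k then 1 else 0 := by
    intro k
    change (Pi.single (k:ℕ) (1:ℂ) : ℕ → ℂ) x = _
    rw [Pi.single_apply]
  simp only [h2]
  by_cases hx : x < N
  · rw [Finset.sum_eq_single (⟨x, hx⟩ : Fin N)]
    · simpa using hu _
    · intro b _ hb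
      rw [if_neg, mul_zero]
      rintro rfl; exact hb rfl
    · simp
  · rw [Finset.sum_eq_zero]
    · simp
    · intro k _
      rw [if_neg, mul_zero]
      have := k.2; omega

lemma bh_hB {n : ℕ} (N : ℕ) (hn : 1 ≤ n) (L : ContinuousMultilinearMap ℂ
      (fun _ : Fin (n + 1) => ZeroAtInftyContinuousMap ℕ ℂ) ℂ)
    (hsym : ∀ (σ : Equiv.Perm (Fin (n + 1)))
      (z : Fin (n + 1) → ZeroAtInftyContinuousMap ℕ ℂ), L (z ∘ σ) = L z) (C : ℝ)
    (hC : ∀ z, ‖z‖ ≤ 1 → ‖L fun _ => z‖ ≤ C)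
    (z : Fin N → ℂ) (hz : ∀ r, ‖z r‖ = 1) :
    ∑ k : Fin N, ‖∑ j : Fin n → Fin N,
      L (fun l => c0UnitVector ((Fin.cons k j : Fin (n+1) → Fin N) l)) * ∏ l, z (j l)‖
      ≤ Real.exp 1 * C := by
  set Z : ZeroAtInftyContinuousMap ℕ ℂ := ∑ r, z r • c0UnitVector r with hZ
  have e1 : ∀ k : Fin N, ∑ j : Fin n → Fin N,
      L (fun l => c0UnitVector ((Fin.cons k j : Fin (n+1) → Fin N) l)) * ∏ l, z (j l)
      = L.curryLeft (c0UnitVector k) (fun _ => Z) := by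
    intro k
    rw [hZ, ContinuousMultilinearMap.map_sum]
    refine Finset.sum_congr rfl fun j _ => ?_
    rw [ContinuousMultilinearMap.map_smul_univ, smul_eq_mul, mul_comm,
      ContinuousMultilinearMap.curryLeft_apply]
    congr 2
    funext l
    refine Fin.cases ?_ (fun l => ?_) l <;> simp
  simp only [e1]
  set v : Fin N → ℂ := fun k => L.curryLeft (c0UnitVector k) (fun _ => Z) with hv
  have hu : ∀ k, ∃ c : ℂ, ‖c‖ ≤ 1 ∧ c * v k = ‖v k‖ := by
    intro k
    by_cases h : v k = 0
    · exact ⟨0, by simp, by simp [h]⟩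
    · refine ⟨(‖v k‖ : ℂ) / v k, ?_, ?_⟩
      · rw [norm_div]; simp [h]
      · rw [div_mul_cancel₀ _ h]
  choose u hu1 hu2 using hu
  have h3 : ((∑ k, ‖v k‖ : ℝ) : ℂ) = L (Fin.cons (∑ k, u k • c0UnitVector k) fun _ => Z) := by
    push_cast
    rw [← ContinuousMultilinearMap.curryLeft_apply, map_sum, _root_.sum_apply]
    refine Finset.sum_congr rfl fun k _ => ?_
    rw [← hu2, map_smul]; rfl
  have h4 := bh_harris n hn L hsym C hC Z (∑ k, u k • c0UnitVector k)
    (bh_norm_comb z fun r => (hz r).le) (bh_norm_comb u hu1)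
  rw [← h3, Complex.norm_real, Real.norm_of_nonneg (Finset.sum_nonneg fun _ _ => norm_nonneg _)] at h4
  exact h4

noncomputable def bhfs {m N : ℕ} (i : Fin m → Fin N) : ℕ →₀ ℕ :=
  ∑ l, Finsupp.single (i l : ℕ) 1

lemma bhfs_apply {m N : ℕ} (i : Fin m → Fin N) (r : ℕ) :
    bhfs i r = (univ.filter fun l => (i l : ℕ) = r).card := by
  unfold bhfs
  rw [Finsupp.finsetSum_apply, Finset.card_filter]
  exact Finset.sum_congr rfl fun l _ => by rw [Finsupp.single_apply]

lemma bhfs_val {m N : ℕ} (i : Fin m → Fin N) (r : Fin N) : bhfs i r = bhcnt i r := by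
  rw [bhfs_apply]; unfold bhcnt
  simp only [Fin.val_inj]

lemma bhfs_ge {m N : ℕ} (i : Fin m → Fin N) (r : ℕ) (hr : N ≤ r) : bhfs i r = 0 := by
  rw [bhfs_apply, Finset.card_eq_zero, Finset.filter_eq_empty_iff]
  intro l _ h
  have := (i l).2; omega

lemma bhfs_eq_iff {m N : ℕ} (i i' : Fin m → Fin N) : bhfs i = bhfs i' ↔ bhcnt i = bhcnt i' := by
  constructor
  · intro h; funext r; rw [← bhfs_val, ← bhfs_val, h]
  · intro h
    ext r
    by_cases hr : r < N
    · have := congrFun h ⟨r, hr⟩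
      rw [← bhfs_val, ← bhfs_val] at this
      exact this
    · rw [bhfs_ge _ _ (by omega), bhfs_ge _ _ (by omega)]

lemma bhfs_support {m N : ℕ} (i : Fin m → Fin N) : (bhfs i).support ⊆ range N := by
  intro r hr
  rw [Finsupp.mem_support_iff] at hr
  rw [mem_range]
  by_contra h
  exact hr (bhfs_ge i r (by omega))

lemma bhfs_card {m N : ℕ} (i : Fin m → Fin N) : (bhfs i).support.card = bhvar i := by
  unfold bhvar
  rw [← Finset.card_map Fin.valEmbedding]
  congr 1
  ext r
  simp only [Finsupp.mem_support_iff, mem_map, mem_filter, mem_univ, true_and, Fin.valEmbedding_apply]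
  constructor
  · intro h
    have hr : r < N := by
      by_contra h'
      exact h (bhfs_ge i r (by omega))
    exact ⟨⟨r, hr⟩, by rw [← bhfs_val]; exact h, rfl⟩
  · rintro ⟨x, hx, rfl⟩
    rwa [bhfs_val]

lemma bhfs_prod {m N : ℕ} (i : Fin m → Fin N) :
    ((bhfs i).prod fun _ k => (k.factorial : ℂ)) = ∏ r, ((bhcnt i r).factorial : ℂ) := by
  rw [Finsupp.prod_of_support_subset _ (bhfs_support i) _ (by simp), Finset.prod_range]
  exact Finset.prod_congr rfl fun r _ => by rw [bhfs_val]

lemma bhfs_exists (N m : ℕ) : ∀ α : ℕ →₀ ℕ, (α.sum fun _ k => k) = m → α.support ⊆ range N →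
    ∃ i : Fin m → Fin N, bhfs i = α := by
  induction m with
  | zero =>
    intro α h _
    refine ⟨Fin.elim0, ?_⟩
    have : α = 0 := by
      ext r
      by_contra hr
      have hr' : r ∈ α.support := Finsupp.mem_support_iff.2 hr
      exact hr (Finset.sum_eq_zero_iff.1 h r hr')
    subst this
    simp [bhfs]
  | succ m ih =>
    intro α h hs
    have hne : α ≠ 0 := by rintro rfl; simp at h
    obtain ⟨r, hr⟩ := Finsupp.support_nonempty_iff.2 hne
    have hr0 := Finsupp.mem_support_iff.1 hr
    have hle : Finsupp.single r 1 ≤ α := by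
      rw [Finsupp.single_le_iff]; omega
    have e : Finsupp.single r 1 + (α - Finsupp.single r 1) = α := add_tsub_cancel_of_le hle
    obtain ⟨i, hi⟩ := ih (α - Finsupp.single r 1) (by
      rw [← e, Finsupp.sum_add_index' (by simp) (by simp), Finsupp.sum_single_index (by simp)] at h
      omega) (by
      refine subset_trans ?_ hs
      intro x hx
      rw [Finsupp.mem_support_iff] at hx ⊢
      intro h0; apply hx
      simp [h0])
    refine ⟨Fin.cons ⟨r, mem_range.1 (hs hr)⟩ i, ?_⟩
    unfold bhfs at hi ⊢
    rw [Fin.sum_univ_succ]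
    simp only [Fin.cons_zero, Fin.cons_succ]
    rw [hi, e]

lemma bh_const (n M : ℕ) (C : ℝ) (hC : 0 ≤ C) :
    Real.sqrt (((n:ℝ) + 1) * (2 * (n:ℝ)) ^ M) * (Real.exp 1 * C) ≤
      Real.exp 1 * 2 ^ ((M : ℝ) / 2) * ((n : ℝ) + 1) ^ (((M : ℝ) + 1) / 2) * C := by
  have h : Real.sqrt (((n:ℝ) + 1) * (2 * (n:ℝ)) ^ M) ≤
      2 ^ ((M : ℝ) / 2) * ((n : ℝ) + 1) ^ (((M : ℝ) + 1) / 2) := by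
    apply Real.sqrt_le_iff.2 ⟨by positivity, ?_⟩
    have e1 : ((2:ℝ) ^ ((M : ℝ) / 2)) ^ 2 = 2 ^ M := by
      rw [← Real.rpow_natCast, ← Real.rpow_mul (by positivity), ← Real.rpow_natCast]
      congr 1; push_cast; ring
    have e2 : (((n:ℝ) + 1) ^ (((M : ℝ) + 1) / 2)) ^ 2 = ((n:ℝ) + 1) ^ (M + 1) := by
      rw [← Real.rpow_natCast, ← Real.rpow_mul (by positivity), ← Real.rpow_natCast]
      congr 1; push_cast; ring
    rw [mul_pow, mul_pow, e1, e2, pow_succ]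
    have : (n:ℝ) ^ M ≤ ((n:ℝ) + 1) ^ M := by gcongr; linarith
    calc ((n:ℝ) + 1) * (2 ^ M * (n:ℝ) ^ M) ≤ ((n:ℝ) + 1) * (2 ^ M * ((n:ℝ) + 1) ^ M) := by gcongr
      _ = _ := by ring
  calc _ ≤ (2 ^ ((M : ℝ) / 2) * ((n : ℝ) + 1) ^ (((M : ℝ) + 1) / 2)) * (Real.exp 1 * C) := by gcongr
    _ = _ := by ring

/-- **Bohnenblust–Hille type inequality on `c₀` with polynomial growth in `m`.**
Let `m = n+1 ≥ 2`, `M ≥ 1`, let `L` be a symmetric continuous `m`-linear form on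
`c₀`, `P(z) = L(z,…,z)`, and let `cP α = (m!/∏ α_i!) · L(e^α)` be the monomial
coefficients of `P` (encoded by the hypothesis `hcP`, using any tuple `t` whose
multi-index is `α`). Then, with `Λ_M = {α : |α| = m, var(α) ≤ M}`,
`(∑_{α ∈ Λ_M} |c_α(P)|^{2m/(m+1)})^{(m+1)/(2m)} ≤ e · 2^{M/2} m^{(M+1)/2} ‖P‖`. -/
theorem bohnenblust_hille_c0 (n M : ℕ) (hn : 1 ≤ n) (hM : 1 ≤ M)
    (L : ContinuousMultilinearMap ℂ
      (fun _ : Fin (n + 1) => ZeroAtInftyContinuousMap ℕ ℂ) ℂ)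
    (hsym : ∀ (σ : Equiv.Perm (Fin (n + 1)))
      (z : Fin (n + 1) → ZeroAtInftyContinuousMap ℕ ℂ), L (z ∘ σ) = L z)
    (cP : (ℕ →₀ ℕ) → ℂ)
    (hcP : ∀ (α : ℕ →₀ ℕ) (t : Fin (n + 1) → ℕ),
      (∀ r : ℕ, (Finset.univ.filter fun l => t l = r).card = α r) →
      cP α = (((n + 1).factorial : ℂ) / (α.prod fun _ k => (k.factorial : ℂ))) *
        L (fun l => c0UnitVector (t l))) :
    (∑' α : {α : ℕ →₀ ℕ //
          (α.sum fun _ k => k) = n + 1 ∧ α.support.card ≤ M},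
        (‖cP α.1‖₊ : ENNReal) ^ ((2 * ((n : ℝ) + 1)) / ((n : ℝ) + 2)))
        ^ (((n : ℝ) + 2) / (2 * ((n : ℝ) + 1)))
      ≤ ENNReal.ofReal (Real.exp 1 * 2 ^ ((M : ℝ) / 2) *
          ((n : ℝ) + 1) ^ (((M : ℝ) + 1) / 2) *
          ⨆ z ∈ {z : ZeroAtInftyContinuousMap ℕ ℂ | ‖z‖ ≤ 1},
            ‖L fun _ => z‖) := by
  have hC := bh_sup_le L
  set C : ℝ := ⨆ z ∈ {z : ZeroAtInftyContinuousMap ℕ ℂ | ‖z‖ ≤ 1}, ‖L fun _ => z‖ with hCdef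
  have hC0 : 0 ≤ C := (norm_nonneg _).trans (hC 0 (by simp))
  set A : ℝ := Real.exp 1 * 2 ^ ((M : ℝ) / 2) * ((n : ℝ) + 1) ^ (((M : ℝ) + 1) / 2) * C with hA
  have hA0 : 0 ≤ A := by positivity
  have hpe : ((n : ℝ) + 2) / (2 * ((n : ℝ) + 1)) = ((2 * ((n : ℝ) + 1)) / ((n : ℝ) + 2))⁻¹ := by
    rw [inv_div]
  rw [hpe]
  set p : ℝ := (2 * ((n:ℝ) + 1)) / ((n:ℝ) + 2) with hp
  have hp0 : 0 < p := by positivity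
  suffices hmain : (∑' α : {α : ℕ →₀ ℕ //
          (α.sum fun _ k => k) = n + 1 ∧ α.support.card ≤ M},
        (‖cP α.1‖₊ : ENNReal) ^ p) ≤ ENNReal.ofReal A ^ p by
    refine (ENNReal.rpow_le_rpow hmain (by positivity)).trans (le_of_eq ?_)
    rw [← ENNReal.rpow_mul, mul_inv_cancel₀ hp0.ne', ENNReal.rpow_one]
  rw [ENNReal.ofReal_rpow_of_nonneg hA0 hp0.le, ENNReal.tsum_eq_iSup_sum]
  refine iSup_le fun s => ?_
  have e0 : ∑ α ∈ s, (‖cP α.1‖₊ : ENNReal) ^ p = ENNReal.ofReal (∑ α ∈ s, ‖cP α.1‖ ^ p) := by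
    rw [ENNReal.ofReal_sum_of_nonneg (fun _ _ => by positivity)]
    refine Finset.sum_congr rfl fun α _ => ?_
    rw [← ENNReal.ofReal_rpow_of_nonneg (norm_nonneg _) hp0.le, ofReal_norm]
    rfl
  rw [e0]
  apply ENNReal.ofReal_le_ofReal
  obtain ⟨N, hN⟩ : ∃ N, ∀ α ∈ s, α.1.support ⊆ range N := by
    obtain ⟨N, hN⟩ := (s.biUnion fun α => α.1.support).exists_nat_subset_range
    exact ⟨N, fun α hα => (Finset.subset_biUnion_of_mem (fun α => α.1.support) hα).trans hN⟩
  let a : (Fin (n+1) → Fin N) → ℂ := fun i => L (fun l => c0UnitVector (i l))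
  have hca : ∀ i, cP (bhfs i) = (((n + 1).factorial : ℂ) / ∏ r, ((bhcnt i r).factorial : ℂ)) * a i := by
    intro i
    rw [hcP (bhfs i) (fun l => (i l : ℕ)) (fun r => (bhfs_apply i r).symm), bhfs_prod]
  have hnorm : ∀ i, ‖cP (bhfs i)‖ = bhmu i * ‖a i‖ := by
    intro i
    rw [hca, norm_mul, norm_div, norm_prod]
    simp only [RCLike.norm_natCast]
    rfl
  have ha : ∀ i i', bhcnt i = bhcnt i' → a i = a i' := by
    intro i i' h
    have h1 := hca i
    rw [(bhfs_eq_iff i i').2 h, hca i', h] at h1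
    refine (mul_left_cancel₀ ?_ h1).symm
    refine div_ne_zero (by exact_mod_cast Nat.factorial_ne_zero _)
      (Finset.prod_ne_zero_iff.2 fun r _ => by exact_mod_cast Nat.factorial_ne_zero _)
  have hcore := bh_core n N M hn a ha (Real.exp 1 * C) (fun z hz => bh_hB N hn L hsym C hC z hz)
  rw [← hp] at hcore
  have hlast : (Real.sqrt (((n:ℝ) + 1) * (2 * (n:ℝ)) ^ M) * (Real.exp 1 * C)) ^ p ≤ A ^ p :=
    Real.rpow_le_rpow (by positivity) (bh_const n M C hC0) hp0.le
  refine le_trans ?_ (hcore.trans hlast)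
  set F : (Fin (n+1) → Fin N) → ℝ := fun i =>
    if bhvar i ≤ M then (bhfib i : ℝ)⁻¹ * (bhmu i * ‖a i‖) ^ p else 0 with hF
  have hF0 : ∀ i, 0 ≤ F i := by
    intro i
    have := bhmu_pos i
    simp only [hF]; split_ifs <;> positivity
  have hfiber : ∀ α ∈ s, ‖cP α.1‖ ^ p ≤ ∑ i with bhfs i = α.1, F i := by
    intro α hα
    obtain ⟨i0, hi0⟩ := bhfs_exists N (n+1) α.1 α.2.1 (hN α hα)
    have hFi : ∀ i ∈ univ.filter (fun i : Fin (n+1) → Fin N => bhfs i = α.1),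
        F i = (bhfib i0 : ℝ)⁻¹ * ‖cP α.1‖ ^ p := by
      intro i hi
      have hi1 : bhfs i = α.1 := (Finset.mem_filter.1 hi).2
      have hc : bhcnt i = bhcnt i0 := (bhfs_eq_iff i i0).1 (hi1.trans hi0.symm)
      have h2 : bhfib i = bhfib i0 := by unfold bhfib; rw [hc]
      have hv : bhvar i ≤ M := by rw [← bhfs_card, hi1]; exact α.2.2
      simp only [hF]
      rw [if_pos hv, ← hnorm, hi1, h2]
    rw [Finset.sum_congr rfl hFi, Finset.sum_const, nsmul_eq_mul]
    have hcard : (univ.filter (fun i : Fin (n+1) → Fin N => bhfs i = α.1)).card = bhfib i0 := by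
      unfold bhfib
      congr 1
      ext i
      simp only [mem_filter, mem_univ, true_and]
      rw [← hi0, bhfs_eq_iff]
    have hpos : (0:ℝ) < bhfib i0 := by exact_mod_cast bhfib_pos i0
    rw [hcard, mul_inv_cancel_left₀ hpos.ne']
  refine (Finset.sum_le_sum hfiber).trans ?_
  rw [← Finset.sum_biUnion]
  · exact Finset.sum_le_sum_of_subset_of_nonneg (Finset.subset_univ _) (fun i _ _ => hF0 i)
  · intro α _ β _ hne
    rw [Function.onFun, Finset.disjoint_left]
    intro i hi hi'
    apply hne
    apply Subtype.ext
    rw [← (Finset.mem_filter.1 hi).2, ← (Finset.mem_filter.1 hi').2]
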